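/- Let R be a quasi-Frobenius ring of infinite global dimension. Then the canonical triangulated functor from the unbounded derived category D(mod R) of finitely generated left R-modules to D(Mod R) is not full. -/

import Mathlib

open CategoryTheory CategoryTheory.Limits

lemma qf_exists_simple {R : Type} [Ring R]
    [HasExt.{0} (ModuleCat.{0} R)]
    (hgl : ∃ M N : ModuleCat.{0} R, ¬ Subsingleton (Abelian.Ext M N (0 + 1))) :
    ∃ m : Ideal R, IsSimpleModule R (R ⧸ m) ∧ ¬ Module.Projective R (R ⧸ m) := by
  by_contra! hcon
  have hss : IsSemisimpleRing R := by
    apply IsSemisimpleModule.of_sSup_simples_eq_top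
    by_contra hne
    obtain ⟨m, hm, hle⟩ := (eq_top_or_exists_le_coatom
      (sSup { m : Submodule R R | IsSimpleModule R m })).resolve_left hne
    have hs : IsSimpleModule R (R ⧸ m) := isSimpleModule_iff_isCoatom.2 hm
    have hp := hcon m hs
    obtain ⟨s, hs'⟩ := Module.projective_lifting_property m.mkQ LinearMap.id m.mkQ_surjective
    have hinj : Function.Injective s := by
      intro x y hxy
      have := congrArg m.mkQ hxy
      have h1 := LinearMap.congr_fun hs' x
      have h2 := LinearMap.congr_fun hs' y
      simp only [LinearMap.comp_apply, LinearMap.id_apply] at h1 h2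
      rw [← h1, ← h2, this]
    have hsimp : IsSimpleModule R (LinearMap.range s) :=
      IsSimpleModule.congr (LinearEquiv.ofInjective s hinj).symm
    have hle2 : LinearMap.range s ≤ m := le_trans (le_sSup hsimp) hle
    have hnt := IsSimpleModule.nontrivial R (R ⧸ m)
    obtain ⟨x, hx⟩ := exists_ne (0 : R ⧸ m)
    apply hx
    have h1 := LinearMap.congr_fun hs' x
    simp only [LinearMap.comp_apply, LinearMap.id_apply] at h1
    rw [← h1, Submodule.mkQ_apply, Submodule.Quotient.mk_eq_zero]
    exact hle2 ⟨x, rfl⟩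
  obtain ⟨M, N, h⟩ := hgl
  apply h
  have hp : Module.Projective R M := Module.projective_of_isSemisimpleRing R M
  have : Projective M := (IsProjective.iff_projective (R := R) M).1 hp
  exact ⟨fun a b => (Abelian.Ext.eq_zero_of_projective a).trans (Abelian.Ext.eq_zero_of_projective b).symm⟩

lemma qf_stably_zero {R : Type} [Ring R] {S T : Type} [AddCommGroup S] [Module R S]
    [AddCommGroup T] [Module R T] [IsSimpleModule R S] (hS : ¬ Module.Projective R S)
    [Module.Projective R T] {j : ℕ} (f : (Fin j → S) →ₗ[R] T) (g : T →ₗ[R] (Fin j → S)) :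
    g ∘ₗ f = 0 := by
  have key : ∀ (f : S →ₗ[R] T) (g : T →ₗ[R] S), g ∘ₗ f = 0 := by
    intro f g
    rcases LinearMap.bijective_or_eq_zero (g ∘ₗ f) with h | h
    · exfalso
      apply hS
      let e := LinearEquiv.ofBijective _ h
      refine Module.Projective.of_split f (e.symm.toLinearMap ∘ₗ g) ?_
      ext x
      exact e.symm_apply_apply x
    · exact h
  apply LinearMap.pi_ext'
  intro i
  ext x k
  exact LinearMap.congr_fun (key (f ∘ₗ LinearMap.single R (fun _ => S) i) (LinearMap.proj k ∘ₗ g)) x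

lemma qf_bound {R : Type} [Ring R] {S C : Type} [AddCommGroup S] [Module R S]
    [AddCommGroup C] [Module R C] [IsSimpleModule R S] [IsNoetherian R C]
    (H : ∀ j : ℕ, ∃ f : (Fin j → S) →ₗ[R] C, Function.Injective f) : False := by
  let D : Submodule R C := sSup { m : Submodule R C | IsSimpleModule R m }
  have hD : IsSemisimpleModule R D := by
    have := isSemisimpleModule_biSup_of_isSemisimpleModule_submodule
      (s := { m : Submodule R C | IsSimpleModule R m }) (p := fun m => m)
      (fun i hi => by have : IsSimpleModule R i := hi; infer_instance)
    rwa [← sSup_eq_iSup] at this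
  have hart : IsArtinian R D := by
    have := (IsSemisimpleModule.finite_tfae (R := R) (M := D)).out 1 2
    exact this.1 inferInstance
  have hfin : Module.length R D ≠ ⊤ := Module.length_ne_top
  have hle : ∀ j : ℕ, (j : ℕ∞) ≤ Module.length R D := by
    intro j
    obtain ⟨f, hf⟩ := H j
    have hmem : ∀ x, f x ∈ D := by
      intro x
      have hx : x = ∑ i, LinearMap.single R (fun _ => S) i (x i) := by
        simp [LinearMap.single_apply, Finset.univ_sum_single]
      rw [hx, map_sum]
      refine Submodule.sum_mem _ fun i _ => ?_
      have hinj : Function.Injective (f ∘ₗ LinearMap.single R (fun _ => S) i) :=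
        hf.comp (Pi.single_injective (M := fun _ : Fin j => S) i)
      have hsimp : IsSimpleModule R (LinearMap.range (f ∘ₗ LinearMap.single R (fun _ => S) i)) :=
        IsSimpleModule.congr (LinearEquiv.ofInjective _ hinj).symm
      exact (le_sSup hsimp : _ ≤ D) ⟨x i, rfl⟩
    have := Module.length_le_of_injective (f.codRestrict D hmem) (fun x y h => hf (congrArg Subtype.val h))
    rw [Module.length_pi_of_fintype] at this
    simpa [Module.length_eq_one] using this
  obtain ⟨n, hn⟩ := ENat.ne_top_iff_exists.1 hfin
  have := hle (n + 1)
  rw [← hn] at this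
  have h2 : n + 1 ≤ n := by exact_mod_cast this
  omega

/-- short exact sequences with f.g. projective middle term -/
def QFRel {R : Type} [Ring R] (M N : ModuleCat.{0} R) : Prop :=
  ∃ (T : ModuleCat.{0} R) (i : M →ₗ[R] T) (p : T →ₗ[R] N),
    Module.Finite R T ∧ Module.Projective R T ∧ Function.Injective i ∧ Function.Surjective p ∧
      LinearMap.range i = LinearMap.ker p

lemma qf_cover {R : Type} [Ring R] [IsNoetherianRing R] (M : ModuleCat.{0} R)
    (hM : Module.Finite R M) : ∃ N : ModuleCat.{0} R, Module.Finite R N ∧ QFRel N M := by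
  obtain ⟨n, f, hf⟩ := Module.Finite.exists_fin' R M
  refine ⟨ModuleCat.of R (LinearMap.ker f), ?_, ModuleCat.of R (Fin n → R),
    (LinearMap.ker f).subtype, f, ?_, ?_, Subtype.val_injective, hf, ?_⟩
  · exact inferInstanceAs (Module.Finite R (LinearMap.ker f))
  · exact inferInstanceAs (Module.Finite R (Fin n → R))
  · exact inferInstanceAs (Module.Projective R (Fin n → R))
  · exact Submodule.range_subtype _

lemma qf_hull {R : Type} [Ring R] [IsNoetherianRing R]
    (hQF : ∀ M : ModuleCat.{0} R, Module.Injective R M ↔ Module.Projective R M)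
    (M : ModuleCat.{0} R)
    (hM : Module.Finite R M) : ∃ N : ModuleCat.{0} R, Module.Finite R N ∧ QFRel M N := by
  classical
  let I : ModuleCat.{0} R := Injective.under M
  let g : M →ₗ[R] I := (Injective.ι M).hom
  have hg : Function.Injective g := (ModuleCat.mono_iff_injective _).1 (inferInstance : Mono (Injective.ι M))
  have hI : Module.Projective R I := by
    rw [← hQF]
    have : Injective (ModuleCat.of R I) := inferInstanceAs (Injective (Injective.under M))
    exact Module.injective_module_of_injective_object R I
  obtain ⟨s, hs⟩ := hI.out
  have hf : Function.Injective (s ∘ₗ g) := hs.injective.comp hg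
  obtain ⟨G, hG⟩ := hM.fg_top
  let t : Finset I := G.sup fun x => (s (g x)).support
  have hsupp : ∀ x : M, s (g x) ∈ Finsupp.supported R R (t : Set I) := by
    intro x
    have : (⊤ : Submodule R M) ≤ (Finsupp.supported R R (t : Set I)).comap (s ∘ₗ g) := by
      rw [← hG, Submodule.span_le]
      intro y hy
      simp only [Submodule.comap_coe, Set.mem_preimage, SetLike.mem_coe, Finsupp.mem_supported]
      exact_mod_cast Finset.le_sup (f := fun x => (s (g x)).support) hy
    exact this (Submodule.mem_top : x ∈ ⊤)
  let f : M →ₗ[R] (t → R) := LinearMap.pi fun k => Finsupp.lapply k.1 ∘ₗ s ∘ₗ g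
  have hfi : Function.Injective f := by
    rw [← LinearMap.ker_eq_bot, LinearMap.ker_eq_bot']
    intro x hx
    apply hf
    rw [map_zero]
    ext k
    by_cases hk : k ∈ t
    · exact congrFun hx ⟨k, hk⟩
    · by_contra hne
      exact hk ((Finsupp.mem_supported _ _).1 (hsupp x) (Finsupp.mem_support_iff.2 hne))
  refine ⟨ModuleCat.of R ((t → R) ⧸ LinearMap.range f), ?_, ModuleCat.of R (t → R), f,
    (LinearMap.range f).mkQ, ?_, ?_, hfi, Submodule.mkQ_surjective _, ?_⟩
  · exact inferInstanceAs (Module.Finite R ((t → R) ⧸ LinearMap.range f))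
  · exact inferInstanceAs (Module.Finite R (t → R))
  · exact inferInstanceAs (Module.Projective R (t → R))
  · exact (Submodule.ker_mkQ _).symm

lemma int_seq {α : Type*} (r : α → α → Prop) (h1 : ∀ x, ∃ y, r x y) (h2 : ∀ y, ∃ x, r x y) (x : α) :
    ∃ Z : ℤ → α, Z 0 = x ∧ ∀ n, r (Z n) (Z (n + 1)) := by
  choose u hu using h1
  choose l hl using h2
  refine ⟨fun n => match n with
    | Int.ofNat k => u^[k] x
    | Int.negSucc k => l^[k + 1] x, rfl, ?_⟩
  rintro (k | _ | k)
  · change r (u^[k] x) (u^[k + 1] x)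
    rw [Function.iterate_succ_apply']
    exact hu _
  · exact hl _
  · change r (l^[k + 1 + 1] x) (l^[k + 1] x)
    rw [Function.iterate_succ_apply' l (k + 1)]
    exact hl _

/-- complete resolution -/
structure CompRes (R : Type) [Ring R] where
  Z : ℤ → ModuleCat.{0} R
  T : ℤ → ModuleCat.{0} R
  i : ∀ n, Z n →ₗ[R] T n
  p : ∀ n, T n →ₗ[R] Z (n + 1)
  finZ : ∀ n, Module.Finite R (Z n)
  proj : ∀ n, Module.Projective R (T n)
  inj : ∀ n, Function.Injective (i n)
  surj : ∀ n, Function.Surjective (p n)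
  exact : ∀ n, LinearMap.range (i n) = LinearMap.ker (p n)

lemma exists_compRes {R : Type} [Ring R] [IsNoetherianRing R]
    (hQF : ∀ M : ModuleCat.{0} R, Module.Injective R M ↔ Module.Projective R M)
    (M : ModuleCat.{0} R) (hM : Module.Finite R M) :
    ∃ K : CompRes R, K.Z 0 = M := by
  obtain ⟨Z, hZ0, hZ⟩ := int_seq
    (α := {M : ModuleCat.{0} R // Module.Finite R M}) (fun a b => QFRel a.1 b.1)
    (fun x => by obtain ⟨N, h, h'⟩ := qf_hull hQF x.1 x.2; exact ⟨⟨N, h⟩, h'⟩)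
    (fun x => by obtain ⟨N, h, h'⟩ := qf_cover x.1 x.2; exact ⟨⟨N, h⟩, h'⟩) ⟨M, hM⟩
  choose T i p h1 h2 h3 h4 h5 using hZ
  exact ⟨⟨fun n => (Z n).1, T, i, p, fun n => (Z n).2, h2, h3, h4, h5⟩, by simp [hZ0]⟩

lemma qf_extend {R : Type} [Ring R] {A B T : Type} [AddCommGroup A] [Module R A]
    [AddCommGroup B] [Module R B] [AddCommGroup T] [Module R T] (hT : Module.Injective R T)
    (d : A →ₗ[R] B) (f : A →ₗ[R] T) (h : ∀ x, d x = 0 → f x = 0) :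
    ∃ w : B →ₗ[R] T, ∀ x, w (d x) = f x := by
  have hle : LinearMap.ker d ≤ LinearMap.ker f := fun x hx => h x hx
  let d' := (LinearMap.ker d).liftQ d le_rfl
  have hd' : Function.Injective d' := by
    rw [← LinearMap.ker_eq_bot]
    exact Submodule.ker_liftQ_eq_bot _ _ _ le_rfl
  obtain ⟨w, hw⟩ := hT.out d' hd' ((LinearMap.ker d).liftQ f hle)
  exact ⟨w, fun x => hw (Submodule.Quotient.mk x)⟩

def StepA {R : Type} [Ring R] (K : CompRes R) (P : CochainComplex (ModuleCat.{0} R) ℤ)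
    (h : ∀ n, K.T n →ₗ[R] P.X n) (n : ℤ) : Prop :=
  ∃ (v : P.X n →ₗ[R] K.Z (n + 1)) (H : K.T (n + 1) →ₗ[R] K.Z (n + 1)),
    (∀ m (x : P.X m), v ((P.d m n).hom x) = 0) ∧
    ∀ x, K.p n x = v (h n x) + H (K.i (n + 1) (K.p n x))

lemma stepA_succ {R : Type} [Ring R] 
    (hQF : ∀ M : ModuleCat.{0} R, Module.Injective R M ↔ Module.Projective R M)
    (K : CompRes R) (P : CochainComplex (ModuleCat.{0} R) ℤ)
    (h : ∀ n, K.T n →ₗ[R] P.X n) (n : ℤ)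
    (hcomm : ∀ x, h (n + 1) (K.i (n + 1) (K.p n x)) = (P.d n (n + 1)).hom (h n x))
    (hex : ∀ y : P.X n, (P.d n (n + 1)).hom y = 0 → ∃ m, ∃ x : P.X m, (P.d m n).hom x = y)
    (hA : StepA K P h n) : StepA K P h (n + 1) := by
  obtain ⟨v, H, hv, hH⟩ := hA
  have hT : ∀ n, Module.Injective R (K.T n) := fun n => (hQF _).2 (K.proj n)
  have pi0 : ∀ n x, K.p n (K.i n x) = 0 := fun n x => by
    have : K.i n x ∈ LinearMap.range (K.i n) := ⟨x, rfl⟩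
    rw [K.exact] at this
    exact this
  obtain ⟨w, hw⟩ := qf_extend (hT (n + 1)) (P.d n (n + 1)).hom (K.i (n + 1) ∘ₗ v) (by
    intro y hy
    obtain ⟨m, x, rfl⟩ := hex y hy
    simp [hv])
  simp only [LinearMap.comp_apply] at hw
  obtain ⟨k, hk⟩ := qf_extend (hT (n + 1 + 1)) (K.i (n + 1 + 1) ∘ₗ K.p (n + 1)) 
    (K.i (n + 1 + 1) ∘ₗ K.p (n + 1)) (fun _ h => h)
  obtain ⟨k, hk⟩ := qf_extend (hT (n + 1)) (K.i (n + 1 + 1) ∘ₗ K.p (n + 1))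
    (LinearMap.id - w ∘ₗ h (n + 1) - K.i (n + 1) ∘ₗ H) (by
      intro y hy
      have hy' : y ∈ LinearMap.ker (K.p (n + 1)) := K.inj (n + 1 + 1) (by simpa using hy)
      rw [← K.exact] at hy'
      obtain ⟨z, rfl⟩ := hy'
      obtain ⟨x, rfl⟩ := K.surj n z
      simp only [LinearMap.sub_apply, LinearMap.id_apply, LinearMap.comp_apply, hcomm, hw]
      rw [← map_sub, ← map_sub]
      conv_lhs => enter [2, 1, 1]; rw [hH x]
      simp)
  refine ⟨K.p (n + 1) ∘ₗ w, K.p (n + 1) ∘ₗ k, ?_, ?_⟩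
  · intro m x
    by_cases hm : m = n
    · subst hm
      simp only [LinearMap.comp_apply, hw, pi0]
    · rw [P.shape]
      · simp
      · simp only [ComplexShape.up_Rel]; omega
  · intro x
    have := congrArg (K.p (n + 1)) (hk x)
    simp only [LinearMap.sub_apply, LinearMap.id_apply, LinearMap.comp_apply, map_sub, pi0, sub_zero] at this
    simp only [LinearMap.comp_apply, this]
    abel

lemma stepA_neg {R : Type} [Ring R] 
    (hQF : ∀ M : ModuleCat.{0} R, Module.Injective R M ↔ Module.Projective R M)
    (K : CompRes R) (P : CochainComplex (ModuleCat.{0} R) ℤ)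
    (h : ∀ n, K.T n →ₗ[R] P.X n)
    (hcomm : ∀ n < -1, ∀ x, h (n + 1) (K.i (n + 1) (K.p n x)) = (P.d n (n + 1)).hom (h n x))
    (hex : ∀ n < -1, ∀ y : P.X n, (P.d n (n + 1)).hom y = 0 → ∃ m, ∃ x : P.X m, (P.d m n).hom x = y)
    (j : ℕ) (hA : StepA K P h (Int.negSucc j)) : StepA K P h (-1) := by
  induction j with
  | zero => exact hA
  | succ j ih =>
    apply ih
    have hj : Int.negSucc (j + 1) < -1 := by omega
    exact stepA_succ hQF K P h (Int.negSucc (j + 1)) (hcomm _ hj) (hex _ hj) hA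

/-- conclusion: embedding into the cokernel -/
lemma stepA_final {R : Type} [Ring R] {S : Type} [AddCommGroup S] [Module R S]
    [IsSimpleModule R S] (hS : ¬ Module.Projective R S) (j : ℕ)
    (K : CompRes R) (hK : K.Z 0 = ModuleCat.of R (Fin j → S))
    (P : CochainComplex (ModuleCat.{0} R) ℤ)
    (h : ∀ n, K.T n →ₗ[R] P.X n)
    (hcomm : ∀ x, h (-1) (K.i (-1) (K.p (-2) x)) = (P.d (-2) (-1)).hom (h (-2) x))
    (hA : StepA K P h (-1)) :
    ∃ f : (Fin j → S) →ₗ[R] (P.X (-1) ⧸ LinearMap.range (P.d (-2) (-1)).hom), Function.Injective f := by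
  obtain ⟨v, H, hv, hH⟩ := hA
  let e : K.Z 0 ≃ₗ[R] (Fin j → S) := (eqToIso hK).toLinearEquiv
  let H' : K.T 0 →ₗ[R] K.Z 0 := H
  have hz : ∀ z : K.Z 0, H' (K.i 0 z) = 0 := by
    intro z
    have := K.proj 0
    have h0 := LinearMap.congr_fun (qf_stably_zero hS (K.i 0 ∘ₗ e.symm.toLinearMap)
      (e.toLinearMap ∘ₗ H')) (e z)
    apply e.injective
    simpa using h0
  let p' : K.T (-1) →ₗ[R] K.Z 0 := K.p (-1)
  have hp' : Function.Surjective p' := K.surj (-1)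
  let v' : P.X (-1) →ₗ[R] K.Z 0 := v
  have hvh : ∀ x, p' x = v' (h (-1) x) := by
    intro x
    have h1 : p' x = v' (h (-1) x) + H' (K.i 0 (p' x)) := hH x
    rw [hz, add_zero] at h1
    exact h1
  let g : K.T (-1) →ₗ[R] (P.X (-1) ⧸ LinearMap.range (P.d (-2) (-1)).hom) :=
    (LinearMap.range (P.d (-2) (-1)).hom).mkQ ∘ₗ h (-1)
  have hg : LinearMap.ker p' ≤ LinearMap.ker g := by
    intro y hy
    have hy' : y ∈ LinearMap.range (K.i (-1)) := by
      rw [K.exact]; exact hy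
    obtain ⟨z, rfl⟩ := hy'
    let p2 : K.T (-2) →ₗ[R] K.Z (-1) := K.p (-2)
    have hp2 : Function.Surjective p2 := K.surj (-2)
    obtain ⟨x, rfl⟩ := hp2 z
    have h2 := hcomm x
    change Submodule.Quotient.mk (h (-1) (K.i (-1) (p2 x))) = _
    change h (-1) (K.i (-1) (p2 x)) = _ at h2
    rw [h2]
    exact (Submodule.Quotient.mk_eq_zero _).2 ⟨_, rfl⟩
  let f : K.Z 0 →ₗ[R] _ := (LinearMap.ker p').liftQ g hg ∘ₗ
    (p'.quotKerEquivOfSurjective hp').symm.toLinearMap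
  have hf : ∀ x, f (p' x) = g x := by
    intro x
    have : (p'.quotKerEquivOfSurjective hp').symm (p' x) = Submodule.Quotient.mk x := by
      rw [LinearEquiv.symm_apply_eq]; rfl
    simp only [f, LinearMap.comp_apply, LinearEquiv.coe_coe, this]
    rfl
  have hfi : Function.Injective f := by
    rw [← LinearMap.ker_eq_bot, LinearMap.ker_eq_bot']
    intro z hz
    obtain ⟨x, rfl⟩ := hp' z
    rw [hf] at hz
    obtain ⟨y, hy⟩ := (Submodule.Quotient.mk_eq_zero _).1 hz
    rw [hvh, ← hy]
    exact hv _ _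
  exact ⟨f ∘ₗ e.symm.toLinearMap, hfi.comp e.symm.injective⟩

lemma CompRes.p_i {R : Type} [Ring R] (K : CompRes R) (n : ℤ) (x : K.Z n) :
    K.p n (K.i n x) = 0 := by
  have : K.i n x ∈ LinearMap.range (K.i n) := ⟨x, rfl⟩
  rw [K.exact] at this
  exact this

abbrev smallT {R : Type} [Ring R] (K : CompRes R) (j : ℕ) (n : ℤ) : Type :=
  PLift (n ≤ (j : ℤ)) → K.T n

abbrev bigT {R : Type} [Ring R] (K : ℕ → CompRes R) (n : ℤ) : Type :=
  ∀ k : {k : ℕ // n ≤ (k : ℤ)}, (K k.1).T n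

def dSmall {R : Type} [Ring R] (K : CompRes R) (j : ℕ) (n : ℤ) :
    smallT K j n →ₗ[R] smallT K j (n + 1) :=
  LinearMap.pi fun k =>
      K.i (n + 1) ∘ₗ K.p n ∘ₗ LinearMap.proj ⟨by have := k.down; omega⟩

def projT {R : Type} [Ring R] (K : ℕ → CompRes R) (n : ℤ) (j : ℕ) (h : n ≤ (j : ℤ)) :
    bigT K n →ₗ[R] (K j).T n :=
  LinearMap.proj (φ := fun k : {k : ℕ // n ≤ (k : ℤ)} => (K k.1).T n) ⟨j, h⟩

def dBig {R : Type} [Ring R] (K : ℕ → CompRes R) (n : ℤ) :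
    bigT K n →ₗ[R] bigT K (n + 1) :=
  LinearMap.pi fun k =>
      (K k.1).i (n + 1) ∘ₗ (K k.1).p n ∘ₗ projT K n k.1 (by have := k.2; omega)

noncomputable def smallW {R : Type} [Ring R] (K : CompRes R) (j : ℕ) :
    CochainComplex (ModuleCat.{0} R) ℤ :=
  CochainComplex.of (fun n => ModuleCat.of R (smallT K j n))
    (fun n => ModuleCat.ofHom (dSmall K j n))
    (fun n => by
      ext x k
      simp [CompRes.p_i, dSmall])

noncomputable def bigW {R : Type} [Ring R] (K : ℕ → CompRes R) :
    CochainComplex (ModuleCat.{0} R) ℤ :=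
  CochainComplex.of (fun n => ModuleCat.of R (bigT K n))
    (fun n => ModuleCat.ofHom (dBig K n))
    (fun n => by
      ext x k
      simp [CompRes.p_i, dBig, projT]
      rfl)

/-- inclusion of the terms -/
noncomputable def smallI {R : Type} [Ring R] (K : CompRes R) (j : ℕ) (n : ℤ) :
    K.T n →ₗ[R] (smallW K j).X n :=
  (LinearMap.pi fun _ => LinearMap.id : K.T n →ₗ[R] smallT K j n)

lemma smallW_d {R : Type} [Ring R] (K : CompRes R) (j : ℕ) (n : ℤ) :
    (smallW K j).d n (n + 1) = ModuleCat.ofHom (dSmall K j n) :=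
  CochainComplex.of_d (fun n => ModuleCat.of R (smallT K j n))
    (fun n => ModuleCat.ofHom (dSmall K j n)) n

lemma bigW_d {R : Type} [Ring R] (K : ℕ → CompRes R) (n : ℤ) :
    (bigW K).d n (n + 1) = ModuleCat.ofHom (dBig K n) :=
  CochainComplex.of_d (fun n => ModuleCat.of R (bigT K n))
    (fun n => ModuleCat.ofHom (dBig K n)) n

lemma smallW_d_I {R : Type} [Ring R] (K : CompRes R) (j : ℕ) (n : ℤ) (x : K.T n) :
    ((smallW K j).d n (n + 1)).hom (smallI K j n x) = smallI K j (n + 1) (K.i (n + 1) (K.p n x)) := by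
  rw [smallW_d]
  rfl

/-- projection -/
noncomputable def bigP {R : Type} [Ring R] (K : ℕ → CompRes R) (n : ℤ) (j : ℕ) (h : n ≤ (j : ℤ)) :
    (bigW K).X n →ₗ[R] (K j).T n :=
  projT K n j h

noncomputable def bigS {R : Type} [Ring R] (K : ℕ → CompRes R) (n : ℤ) (j : ℕ) (h : n ≤ (j : ℤ)) :
    (K j).T n →ₗ[R] (bigW K).X n :=
  (LinearMap.single R (fun k : {k : ℕ // n ≤ (k : ℤ)} => (K k.1).T n) ⟨j, h⟩)

lemma bigW_ext {R : Type} [Ring R] (K : ℕ → CompRes R) (n : ℤ) (x y : (bigW K).X n)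
    (h : ∀ k hk, bigP K n k hk x = bigP K n k hk y) : x = y :=
  funext fun k => h k.1 k.2

lemma bigP_S {R : Type} [Ring R] (K : ℕ → CompRes R) (n : ℤ) (j : ℕ) (h : n ≤ (j : ℤ)) (x) :
    bigP K n j h (bigS K n j h x) = x :=
  Pi.single_eq_same (M := fun k : {k : ℕ // n ≤ (k : ℤ)} => (K k.1).T n) ⟨j, h⟩ x

lemma bigP_S_ne {R : Type} [Ring R] (K : ℕ → CompRes R) (n : ℤ) (j : ℕ) (h : n ≤ (j : ℤ)) (x)
    (k : ℕ) (hk) (hne : k ≠ j) :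
    bigP K n k hk (bigS K n j h x) = 0 :=
  Pi.single_eq_of_ne (M := fun k : {k : ℕ // n ≤ (k : ℤ)} => (K k.1).T n)
    (i := ⟨j, h⟩) (i' := ⟨k, hk⟩) (fun h => hne (congrArg Subtype.val h)) x

lemma bigP_d {R : Type} [Ring R] (K : ℕ → CompRes R) (n : ℤ) (x : (bigW K).X n) (k : ℕ)
    (hk : n + 1 ≤ (k : ℤ)) :
    bigP K (n + 1) k hk (((bigW K).d n (n + 1)).hom x) =
      (K k).i (n + 1) ((K k).p n (bigP K n k (by omega) x)) := by
  rw [bigW_d]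
  rfl

lemma p_bigP_d {R : Type} [Ring R] (K : ℕ → CompRes R) (m n : ℤ) (x : (bigW K).X m) (k : ℕ)
    (hk : n ≤ (k : ℤ)) :
    (K k).p n (bigP K n k hk (((bigW K).d m n).hom x)) = 0 := by
  by_cases h : m + 1 = n
  · subst h
    rw [bigP_d, CompRes.p_i]
  · rw [(bigW K).shape _ _ (by simpa using h)]
    simp

/-- the inclusion of a factor -/
noncomputable def incL {R : Type} [Ring R] (K : ℕ → CompRes R) (j : ℕ) (n : ℤ) :
    (smallW (K j) j).X n →ₗ[R] (bigW K).X n :=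
  if h : n ≤ (j : ℤ) then
    bigS K n j h ∘ₗ (LinearMap.proj ⟨h⟩ : smallT (K j) j n →ₗ[R] (K j).T n) else 0

lemma incL_same {R : Type} [Ring R] (K : ℕ → CompRes R) (j : ℕ) (n : ℤ) (h : n ≤ (j : ℤ))
    (x : smallT (K j) j n) : bigP K n j h (incL K j n x) = x ⟨h⟩ := by
  unfold incL
  rw [dif_pos h]
  exact bigP_S K n j h _

lemma incL_ne {R : Type} [Ring R] (K : ℕ → CompRes R) (j : ℕ) (n : ℤ) (k : ℕ) (h : n ≤ (k : ℤ))
    (hne : k ≠ j)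
    (x : smallT (K j) j n) : bigP K n k h (incL K j n x) = 0 := by
  unfold incL
  by_cases h' : n ≤ (j : ℤ)
  · rw [dif_pos h']
    exact bigP_S_ne K n j h' _ k h hne
  · rw [dif_neg h']
    exact map_zero _

noncomputable def incW {R : Type} [Ring R] (K : ℕ → CompRes R) (j : ℕ) :
    smallW (K j) j ⟶ bigW K where
  f n := ModuleCat.ofHom (incL K j n)
  comm' := by
    rintro n m hnm
    obtain rfl : n + 1 = m := hnm
    rw [smallW_d]
    apply ModuleCat.hom_ext
    apply LinearMap.ext
    intro x
    apply bigW_ext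
    intro k hk
    change bigP K (n + 1) k hk (((bigW K).d n (n + 1)).hom (incL K j n x)) =
      bigP K (n + 1) k hk (incL K j (n + 1) (dSmall (K j) j n x))
    rw [bigP_d]
    by_cases hkj : k = j
    · subst hkj
      have e1 := congrArg (fun t => (K k).i (n + 1) ((K k).p n t))
        (incL_same K k n (by omega) x)
      have e2 := incL_same K k (n + 1) hk (dSmall (K k) k n x)
      exact e1.trans e2.symm
    · have e1 := congrArg (fun t => (K k).i (n + 1) ((K k).p n t))
        (incL_ne K j n k (by omega) hkj x)
      have e2 := incL_ne K j (n + 1) k hk hkj (dSmall (K j) j n x)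
      refine e1.trans (Eq.trans ?_ e2.symm)
      simp

lemma incW_I {R : Type} [Ring R] (K : ℕ → CompRes R) (j : ℕ) (n : ℤ) (h : n ≤ (j : ℤ))
    (x : (K j).T n) : bigP K n j h (((incW K j).f n).hom (smallI (K j) j n x)) = x :=
  incL_same K j n h _

noncomputable def aHom {R : Type} [Ring R] (K : ℕ → CompRes R) (X : CochainComplex (ModuleCat.{0} R) ℤ)
    (hX : ∀ i j, X.d i j = 0)
    (eX : ∀ j : ℕ, (K j).Z (Int.ofNat j + 1) ≃ₗ[R] X.X (Int.ofNat j)) : bigW K ⟶ X where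
  f n := match n with
    | Int.ofNat j => ModuleCat.ofHom ((eX j).toLinearMap ∘ₗ (K j).p (Int.ofNat j) ∘ₗ
        bigP K (Int.ofNat j) j le_rfl)
    | Int.negSucc j => 0
  comm' := by
    rintro n m -
    rw [hX, comp_zero]
    cases m with
    | ofNat j =>
      ext x
      change 0 = eX j ((K j).p (Int.ofNat j) (bigP K (Int.ofNat j) j le_rfl (((bigW K).d n (Int.ofNat j)).hom x)))
      rw [p_bigP_d, map_zero]
    | negSucc j => simp

noncomputable def bHom {R : Type} [Ring R] (K : ℕ → CompRes R) (Y : CochainComplex (ModuleCat.{0} R) ℤ)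
    (hY : ∀ i j, Y.d i j = 0)
    (eY : ∀ j : ℕ, (K j).Z (Int.negSucc j + 1) ≃ₗ[R] Y.X (Int.negSucc j)) : bigW K ⟶ Y where
  f n := match n with
    | Int.ofNat j => 0
    | Int.negSucc j => ModuleCat.ofHom ((eY j).toLinearMap ∘ₗ (K j).p (Int.negSucc j) ∘ₗ
        bigP K (Int.negSucc j) j (by omega))
  comm' := by
    rintro n m -
    rw [hY, comp_zero]
    cases m with
    | ofNat j => simp
    | negSucc j => 
      ext x
      change 0 = eY j ((K j).p _ (bigP K _ j (by omega) (((bigW K).d n _).hom x)))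
      rw [p_bigP_d, map_zero]

lemma qis_of_elem {R : Type} [Ring R] {S₁ S₂ : ShortComplex (ModuleCat.{0} R)} (φ : S₁ ⟶ S₂)
    (hf : S₂.f = 0) (hg : S₂.g = 0)
    (surj : ∀ y : S₂.X₂, ∃ x : S₁.X₂, S₁.g.hom x = 0 ∧ φ.τ₂.hom x = y)
    (inj : ∀ x : S₁.X₂, S₁.g.hom x = 0 → φ.τ₂.hom x = 0 → ∃ w, S₁.f.hom w = x) :
    ShortComplex.QuasiIso φ := by
  have hle : LinearMap.range S₁.moduleCatToCycles ≤
      LinearMap.ker (φ.τ₂.hom ∘ₗ (LinearMap.ker S₁.g.hom).subtype) := by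
    rintro _ ⟨w, rfl⟩
    have := congrArg (fun f => f.hom w) φ.comm₁₂
    simp only [hf, comp_zero] at this
    exact this.symm
  let q : (LinearMap.ker S₁.g.hom ⧸ LinearMap.range S₁.moduleCatToCycles) →ₗ[R] S₂.X₂ :=
    Submodule.liftQ _ _ hle
  let D : ShortComplex.LeftHomologyMapData φ S₁.moduleCatLeftHomologyData
      (ShortComplex.LeftHomologyData.ofZeros S₂ hf hg) :=
    { φK := ModuleCat.ofHom (φ.τ₂.hom ∘ₗ (LinearMap.ker S₁.g.hom).subtype)
      φH := ModuleCat.ofHom q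
      commi := by ext x; rfl
      commf' := by
        ext x
        have := congrArg (fun f => f.hom x) φ.comm₁₂
        exact this.symm
      commπ := by ext x; rfl }
  rw [D.quasiIso_iff]
  change IsIso (ModuleCat.ofHom q)
  rw [ConcreteCategory.isIso_iff_bijective]
  constructor
  · change Function.Injective q
    rw [← LinearMap.ker_eq_bot, LinearMap.ker_eq_bot']
    intro z hz
    obtain ⟨⟨x, hx⟩, rfl⟩ := Submodule.Quotient.mk_surjective _ z
    obtain ⟨w, hw⟩ := inj x hx hz
    exact (Submodule.Quotient.mk_eq_zero _).2 ⟨w, Subtype.ext hw⟩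
  · intro y
    obtain ⟨x, hx, hy⟩ := surj y
    exact ⟨Submodule.Quotient.mk ⟨x, hx⟩, hy⟩

lemma quasiIso_aHom {R : Type} [Ring R] (K : ℕ → CompRes R) (X : CochainComplex (ModuleCat.{0} R) ℤ)
    (hX : ∀ i j, X.d i j = 0)
    (eX : ∀ j : ℕ, (K j).Z (Int.ofNat j + 1) ≃ₗ[R] X.X (Int.ofNat j))
    (hX0 : ∀ j : ℕ, Subsingleton (X.X (Int.negSucc j))) :
    QuasiIso (aHom K X hX eX) := by
  have hsurj : ∀ n (y : X.X n), ∃ x, ((bigW K).d n (n + 1)).hom x = 0 ∧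
      ((aHom K X hX eX).f n).hom x = y := by
    intro n y
    cases n with
    | ofNat j =>
      obtain ⟨z, rfl⟩ := (eX j).surjective y
      obtain ⟨t, rfl⟩ := (K j).surj _ z
      refine ⟨bigS K (Int.ofNat j) j le_rfl t, ?_, ?_⟩
      · apply bigW_ext
        intro k hk
        rw [bigP_d, bigP_S_ne]
        · simp
        · rintro rfl
          simp at hk
      · change (eX j) ((K j).p (Int.ofNat j) (bigP K (Int.ofNat j) j le_rfl
          (bigS K (Int.ofNat j) j le_rfl t))) = _
        rw [bigP_S]
    | negSucc j => exact ⟨0, by simp, Subsingleton.elim (h := hX0 j) _ _⟩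
  have hinj1 : ∀ n (x : (bigW K).X n), ((bigW K).d n (n + 1)).hom x = 0 →
      ((aHom K X hX eX).f n).hom x = 0 → ∀ k hk, (K k).p n (bigP K n k hk x) = 0 := by
    intro n x h1 h2 k hk
    by_cases hlt : n + 1 ≤ (k : ℤ)
    · have := bigP_d K n x k hlt
      rw [h1, map_zero] at this
      apply (K k).inj
      rw [← this, map_zero]
    · obtain rfl : n = Int.ofNat k := by simp; omega
      change (eX k) ((K k).p (Int.ofNat k) (bigP K (Int.ofNat k) k le_rfl x)) = 0 at h2
      exact (eX k).injective (by rw [map_zero]; exact h2)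
  have hinj2 : ∀ n (x : (bigW K).X (n + 1)), 
      (∀ k hk, (K k).p (n + 1) (bigP K (n + 1) k hk x) = 0) → ∃ y, ((bigW K).d n (n + 1)).hom y = x := by
    intro n x h
    have h' : ∀ k hk, ∃ t, (K k).i (n + 1) ((K k).p n t) = bigP K (n + 1) k hk x := by
      intro k hk
      have := LinearMap.mem_ker.2 (h k hk)
      rw [← (K k).exact] at this
      obtain ⟨z, hz⟩ := this
      obtain ⟨t, rfl⟩ := (K k).surj _ z
      exact ⟨t, hz⟩
    choose t ht using h'
    let y : ∀ k : {k : ℕ // n ≤ (k : ℤ)}, (K k.1).T n := fun k =>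
      if hk : n + 1 ≤ (k.1 : ℤ) then t k.1 hk else 0
    refine ⟨(show (bigW K).X n from y), bigW_ext _ _ _ _ fun k hk => ?_⟩
    rw [bigP_d, ← ht]
    congr 2
    exact dif_pos hk
  refine ⟨fun n => ?_⟩
  obtain ⟨m, rfl⟩ : ∃ m, n = m + 1 := ⟨n - 1, by omega⟩
  rw [quasiIsoAt_iff' _ m (m + 1) (m + 1 + 1) (by simp) (by simp)]
  apply qis_of_elem
  · exact hX _ _
  · exact hX _ _
  · exact hsurj (m + 1)
  · intro x h1 h2
    exact hinj2 m x (hinj1 (m + 1) x h1 h2)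

instance smallW_kproj {R : Type} [Ring R] (K : CompRes R) (j : ℕ) : (smallW K j).IsKProjective := by
  have h1 : ∀ n, Projective ((smallW K j).X n) := by
    intro n
    have := K.proj n
    refine (IsProjective.iff_projective (R := R) (PLift (n ≤ (j : ℤ)) → K.T n)).1 ?_
    by_cases h : n ≤ (j : ℤ)
    · have : Unique (PLift (n ≤ (j : ℤ))) := ⟨⟨⟨h⟩⟩, fun _ => rfl⟩
      exact Module.Projective.of_equiv (LinearEquiv.funUnique (PLift (n ≤ (j : ℤ))) R (K.T n)).symm
    · have : IsEmpty (PLift (n ≤ (j : ℤ))) := ⟨fun x => h x.down⟩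
      infer_instance
  have h2 : (smallW K j).IsStrictlyLE (j : ℤ) := by
    rw [CochainComplex.isStrictlyLE_iff]
    intro i hi
    have : IsEmpty (PLift (i ≤ (j : ℤ))) := ⟨fun x => by have := x.down; omega⟩
    have : Subsingleton ((smallW K j).X i) := inferInstanceAs (Subsingleton (PLift (i ≤ (j : ℤ)) → K.T i))
    exact ModuleCat.isZero_of_subsingleton _
  exact CochainComplex.isKProjective_of_projective _ j

section
open DerivedCategory

lemma kproj_lift {C : Type*} [Category C] [Abelian C] [HasDerivedCategory C]
    {K L : CochainComplex C ℤ} [K.IsKProjective] (f : Q.obj K ⟶ Q.obj L) :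
    ∃ g : K ⟶ L, Q.map g = f := by
  obtain ⟨g, hg⟩ := (CochainComplex.IsKProjective.Qh_map_bijective K
    ((HomotopyCategory.quotient _ _).obj L)).surjective
    ((quotientCompQhIso C).hom.app K ≫ f ≫ (quotientCompQhIso C).inv.app L)
  obtain ⟨g, rfl⟩ := (HomotopyCategory.quotient _ _).map_surjective g
  refine ⟨g, ?_⟩
  have := (quotientCompQhIso C).hom.naturality g
  simp only [Functor.comp_map, hg] at this
  simpa using this.symm

lemma kproj_homotopy {C : Type*} [Category C] [Abelian C] [HasDerivedCategory C]
    {K L : CochainComplex C ℤ} [K.IsKProjective] (f g : K ⟶ L) (h : Q.map f = Q.map g) :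
    Nonempty (Homotopy f g) := by
  refine ⟨HomotopyCategory.homotopyOfEq _ _ ?_⟩
  apply (CochainComplex.IsKProjective.Qh_map_bijective K
    ((HomotopyCategory.quotient _ _).obj L)).injective
  have h1 := (quotientCompQhIso C).hom.naturality f
  have h2 := (quotientCompQhIso C).hom.naturality g
  rw [h, ← h2] at h1
  exact (cancel_mono _).1 h1

end

section
open DerivedCategory

lemma qf_core {R : Type} [Ring R] [IsNoetherianRing R]
    (hQF : ∀ M : ModuleCat.{0} R, Module.Injective R M ↔ Module.Projective R M)
    [HasDerivedCategory (ModuleCat.{0} R)]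
    {S : Type} [AddCommGroup S] [Module R S]
    [IsSimpleModule R S] (hS : ¬ Module.Projective R S)
    (K : ℕ → CompRes R) (hK : ∀ j, (K j).Z 0 = ModuleCat.of R (Fin j → S))
    (X Y P : CochainComplex (ModuleCat.{0} R) ℤ)
    (hX : ∀ i j, X.d i j = 0)
    (eX : ∀ j : ℕ, (K j).Z (Int.ofNat j + 1) ≃ₗ[R] X.X (Int.ofNat j))
    (hX0 : ∀ j : ℕ, Subsingleton (X.X (Int.negSucc j)))
    (hY : ∀ i j, Y.d i j = 0)
    (eY : ∀ j : ℕ, (K j).Z (Int.negSucc j + 1) ≃ₗ[R] Y.X (Int.negSucc j))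
    (hP : ∀ n, Module.Finite R (P.X n))
    (s : P ⟶ X) [QuasiIso s] (u : P ⟶ Y)
    (f : Q.obj X ⟶ Q.obj Y)
    (hf1 : Q.map (aHom K X hX eX) ≫ f = Q.map (bHom K Y hY eY))
    (hf2 : Q.map s ≫ f = Q.map u) : False := by
  have hex : ∀ n < -1, ∀ y : P.X n, (P.d n (n + 1)).hom y = 0 →
      ∃ m, ∃ x : P.X m, (P.d m n).hom x = y := by
    intro n hn
    obtain ⟨m, rfl⟩ : ∃ m, n = m + 1 := ⟨n - 1, by omega⟩
    have h1 : X.ExactAt (m + 1) := by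
      apply ShortComplex.exact_of_isZero_X₂
      obtain ⟨k, hk⟩ : ∃ k, m + 1 = Int.negSucc k := by
        cases h : m + 1 with
        | ofNat k => simp at h; omega
        | negSucc k => exact ⟨k, rfl⟩
      have : Subsingleton (X.X (m + 1)) := by rw [hk]; exact hX0 k
      exact ModuleCat.isZero_of_subsingleton (X.X (m + 1))
    have h2 : P.ExactAt (m + 1) := (quasiIsoAt_iff_exactAt' s (m + 1) h1).1 inferInstance
    rw [HomologicalComplex.exactAt_iff' _ m (m + 1) (m + 1 + 1) (by simp) (by simp),
      ShortComplex.moduleCat_exact_iff] at h2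
    intro y hy
    exact ⟨m, h2 y hy⟩
  have hfin := hP (-1)
  apply qf_bound (R := R) (S := S) (C := P.X (-1) ⧸ LinearMap.range (P.d (-2) (-1)).hom)
  intro j
  obtain ⟨h, hh⟩ := kproj_lift (Q.map (incW K j ≫ aHom K X hX eX) ≫ inv (Q.map s))
  have hQ : Q.map (incW K j ≫ bHom K Y hY eY) = Q.map (h ≫ u) := by
    rw [Q.map_comp, Q.map_comp, hh, ← hf1, ← hf2, Q.map_comp]
    simp
  obtain ⟨H⟩ := kproj_homotopy _ _ hQ
  let hT : ∀ n, (K j).T n →ₗ[R] P.X n := fun n => (h.f n).hom ∘ₗ smallI (K j) j n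
  have hcomm : ∀ n x, hT (n + 1) ((K j).i (n + 1) ((K j).p n x)) =
      (P.d n (n + 1)).hom (hT n x) := by
    intro n x
    have := congrArg (fun t => t.hom (smallI (K j) j n x)) (h.comm n (n + 1))
    have h2 := congrArg (fun t => (h.f (n + 1)).hom t) (smallW_d_I (K j) j n x)
    exact h2.symm.trans this.symm
  refine stepA_final hS j (K j) (hK j) P hT (hcomm (-2)) ?_
  refine stepA_neg hQF (K j) P hT (fun n _ => hcomm n) hex j ?_
  refine ⟨(eY j).symm.toLinearMap ∘ₗ (u.f (Int.negSucc j)).hom,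
    (eY j).symm.toLinearMap ∘ₗ (H.hom (Int.negSucc j + 1) (Int.negSucc j)).hom ∘ₗ
      smallI (K j) j (Int.negSucc j + 1), ?_, ?_⟩
  · intro m x
    have := congrArg (fun t => t.hom x) (u.comm m (Int.negSucc j))
    rw [hY, comp_zero] at this
    change (eY j).symm ((u.f (Int.negSucc j)).hom ((P.d m (Int.negSucc j)).hom x)) = 0
    have h2 : (u.f (Int.negSucc j)).hom ((P.d m (Int.negSucc j)).hom x) = 0 := this.symm
    rw [h2, map_zero]
  · intro x
    have hc := H.comm (Int.negSucc j)
    rw [dNext_eq H.hom (show (ComplexShape.up ℤ).Rel (Int.negSucc j) (Int.negSucc j + 1) by simp),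
      prevD_eq H.hom (show (ComplexShape.up ℤ).Rel (Int.negSucc j - 1) (Int.negSucc j) by
        exact sub_add_cancel _ _),
      hY, comp_zero, add_zero] at hc
    have hc1 := congrArg (fun t => t.hom (smallI (K j) j _ x)) hc
    have e1 : ((incW K j ≫ bHom K Y hY eY).f (Int.negSucc j)).hom (smallI (K j) j _ x) =
        eY j ((K j).p _ x) := by
      have := congrArg (fun t => eY j ((K j).p _ t)) (incW_I K j (Int.negSucc j) (by omega) x)
      exact this
    have e2 : ((smallW (K j) j).d (Int.negSucc j) (Int.negSucc j + 1) ≫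
        H.hom (Int.negSucc j + 1) (Int.negSucc j)).hom (smallI (K j) j _ x) =
        (H.hom (Int.negSucc j + 1) (Int.negSucc j)).hom
          (smallI (K j) j _ ((K j).i _ ((K j).p _ x))) :=
      congrArg (fun t => (H.hom (Int.negSucc j + 1) (Int.negSucc j)).hom t)
        (smallW_d_I (K j) j (Int.negSucc j) x)
    have e3 : eY j ((K j).p _ x) = (H.hom (Int.negSucc j + 1) (Int.negSucc j)).hom
          (smallI (K j) j _ ((K j).i _ ((K j).p _ x))) +
          (u.f (Int.negSucc j)).hom ((h.f (Int.negSucc j)).hom (smallI (K j) j _ x)) := by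
      rw [← e1, ← e2]
      exact hc1
    apply (eY j).injective
    rw [e3, map_add, add_comm]
    congr 1
    · exact ((eY j).apply_symm_apply _).symm
    · exact ((eY j).apply_symm_apply _).symm

end

theorem stmt_3 {R : Type} [Ring R] [IsNoetherianRing R]
    (hQF : ∀ M : ModuleCat.{0} R, Module.Injective R M ↔ Module.Projective R M)
    [HasExt.{0} (ModuleCat.{0} R)]
    (hgl : ∀ n : ℕ, ∃ M N : ModuleCat.{0} R, ¬ Subsingleton (Abelian.Ext M N (n + 1)))
    {𝒰 : Type u₁} [Category.{v₁} 𝒰] [Abelian 𝒰]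
    (ι : 𝒰 ⥤ ModuleCat.{0} R) [ι.Full] [ι.Faithful] [ι.Additive]
    [PreservesFiniteLimits ι] [PreservesFiniteColimits ι]
    (hima : ∀ X : 𝒰, Module.Finite R (ι.obj X))
    (himb : ∀ M : ModuleCat.{0} R, Module.Finite R M →
      ∃ X : 𝒰, Nonempty (ι.obj X ≅ M))
    [HasDerivedCategory 𝒰] [HasDerivedCategory (ModuleCat.{0} R)]
    (F : DerivedCategory 𝒰 ⥤ DerivedCategory (ModuleCat.{0} R))
    (hF : (ι.mapHomologicalComplex (ComplexShape.up ℤ) ⋙ DerivedCategory.Q) ≅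
      (DerivedCategory.Q ⋙ F)) :
    ¬ F.Full := by
  intro hfull
  obtain ⟨O, hO⟩ := HasZeroObject.zero (C := 𝒰)
  obtain ⟨m, hm1, hm2⟩ := qf_exists_simple (hgl 0)
  have hKex : ∀ j : ℕ, ∃ K : CompRes R, K.Z 0 = ModuleCat.of R (Fin j → R ⧸ m) := fun j =>
    exists_compRes hQF _ (inferInstanceAs (Module.Finite R (Fin j → R ⧸ m)))
  choose K hK using hKex
  have hxs : ∀ j : ℕ, ∃ A : 𝒰, Nonempty (ι.obj A ≅ (K j).Z (Int.ofNat j + 1)) := fun j =>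
    himb _ ((K j).finZ _)
  have hys : ∀ j : ℕ, ∃ A : 𝒰, Nonempty (ι.obj A ≅ (K j).Z (Int.negSucc j + 1)) := fun j =>
    himb _ ((K j).finZ _)
  choose xs ex using hxs
  choose ys ey using hys
  let X₀ : CochainComplex 𝒰 ℤ :=
    { X := fun n => match n with
        | Int.ofNat j => xs j
        | Int.negSucc _ => O
      d := fun _ _ => 0 }
  let Y₀ : CochainComplex 𝒰 ℤ :=
    { X := fun n => match n with
        | Int.ofNat _ => O
        | Int.negSucc j => ys j
      d := fun _ _ => 0 }
  let I := ι.mapHomologicalComplex (ComplexShape.up ℤ)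
  have hX : ∀ i j, (I.obj X₀).d i j = 0 := fun i j => ι.map_zero _ _
  have hY : ∀ i j, (I.obj Y₀).d i j = 0 := fun i j => ι.map_zero _ _
  let eX : ∀ j : ℕ, (K j).Z (Int.ofNat j + 1) ≃ₗ[R] (I.obj X₀).X (Int.ofNat j) :=
    fun j => (ex j).some.symm.toLinearEquiv
  let eY : ∀ j : ℕ, (K j).Z (Int.negSucc j + 1) ≃ₗ[R] (I.obj Y₀).X (Int.negSucc j) :=
    fun j => (ey j).some.symm.toLinearEquiv
  have hX0 : ∀ j : ℕ, Subsingleton ((I.obj X₀).X (Int.negSucc j)) := fun j =>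
    ModuleCat.subsingleton_of_isZero (ι.map_isZero hO)
  have ha := quasiIso_aHom K (I.obj X₀) hX eX hX0
  let f : DerivedCategory.Q.obj (I.obj X₀) ⟶ DerivedCategory.Q.obj (I.obj Y₀) :=
    inv (DerivedCategory.Q.map (aHom K (I.obj X₀) hX eX)) ≫
      DerivedCategory.Q.map (bHom K (I.obj Y₀) hY eY)
  obtain ⟨g, hg⟩ := F.map_surjective (hF.inv.app X₀ ≫ f ≫ hF.hom.app Y₀)
  obtain ⟨P, s, hs, u, rfl⟩ := DerivedCategory.right_fac g
  have hs1 := hF.hom.naturality s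
  have hu1 := hF.hom.naturality u
  have hQs : DerivedCategory.Q.map (I.map s) =
      hF.hom.app P ≫ F.map (DerivedCategory.Q.map s) ≫ hF.inv.app X₀ := by
    rw [← Category.assoc]
    exact (Iso.eq_comp_inv (hF.app X₀)).2 hs1
  have hQu : DerivedCategory.Q.map (I.map u) =
      hF.hom.app P ≫ F.map (DerivedCategory.Q.map u) ≫ hF.inv.app Y₀ := by
    rw [← Category.assoc]
    exact (Iso.eq_comp_inv (hF.app Y₀)).2 hu1
  have hiso : IsIso (DerivedCategory.Q.map (I.map s)) := by
    rw [hQs]; infer_instance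
  have hqi : QuasiIso (I.map s) := (DerivedCategory.isIso_Q_map_iff_quasiIso _ _).1 hiso
  have hf : f = hF.hom.app X₀ ≫ F.map (inv (DerivedCategory.Q.map s) ≫ DerivedCategory.Q.map u) ≫
      hF.inv.app Y₀ := by
    rw [hg]
    simp
    exact (Category.comp_id _).symm
  refine qf_core hQF hm2 K hK (I.obj X₀) (I.obj Y₀) (I.obj P) hX eX hX0 hY eY
    (fun n => hima _) (I.map s) (I.map u) f ?_ ?_
  · simp [f]
  · rw [hf, hQs, hQu]
    simp
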